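/- arXiv:1106.4676 — 3 statements merged into one kernel-verified Lean document; each statement's English description precedes it below -/
import Mathlib

section
/- Let (X,ρ) be a metric space in which every proper closed ball (every closed ball B(x,α) = {y : ρ(x,y) ≤ α} with B(x,α) ≠ X) is totally bounded. If (CL(X), W_ρ) is a normal topological space, then X is separable. -/
/-!
Suppose `X` is not separable. Then some uncountable `E ⊆ X` is `δ`-separated for some `δ > 0`, and
a proper closed ball, being totally bounded, meets `E` in a finite set (`finite_of_separated`).
Two consequences:

* every `a : X` is the center of a small closed ball meeting `E` in a finite set, so for any
  `T ⊆ E` the singletons `{y}`, `y ∈ T`, form a locally finite, hence closed, subset of `CL X`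
  (`isClosed_singletons`);
* for every `x : X`, all but countably many points of `E` are farthest points of `X` from `x`
  (`countable_not_farthest`).

Split `E` into a countably infinite `S` and the uncountable `E \ S`. If open sets `U` and `V`
contain the singletons of points of `S` and of `E \ S` respectively, choose for every `y ∈ S` a
basic neighborhood of `{y}` inside `U`, given by a finite set `F y` of points of `X`. Some
`β ∈ E \ S` is a farthest point from every `x ∈ ⋃ y ∈ S, F y`. A basic neighborhood of `{β}`
inside `V` is given by finitely many points, and some `α ∈ S` is nearly as far as `β`, or farther,
from each of them. Then `{α, β}` lies in `U ∩ V`, so `CL X` is not normal.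
-/

open Cardinal Set Metric Topology

universe u v

/-- The hyperspace of all nonempty closed subsets of a topological space. -/
def CL (X : Type u) [TopologicalSpace X] : Type u :=
  {A : Set X // A.Nonempty ∧ IsClosed A}

/-- The Wijsman topology on `CL X` determined by a metric `m` on `X`:
the weak (initial) topology determined by the distance functionals
`A ↦ ρ(x, A) = inf {ρ(x,a) : a ∈ A}`, `x ∈ X`. -/
noncomputable def wijsman (X : Type u) [TopologicalSpace X] (m : MetricSpace X) :
    TopologicalSpace (CL X) :=
  ⨅ x : X, TopologicalSpace.induced
    (fun A : CL X => @Metric.infDist X m.toPseudoMetricSpace x A.1) inferInstance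

/-- The lower Vietoris topology on `CL X`, with subbase `{U⁻ : U open}` where
`U⁻ = {A ∈ CL X : A ∩ U ≠ ∅}`. -/
def lowerVietoris (X : Type u) [TopologicalSpace X] : TopologicalSpace (CL X) :=
  TopologicalSpace.generateFrom
    { S | ∃ U : Set X, IsOpen U ∧ S = { A : CL X | (A.1 ∩ U).Nonempty } }

/-- The Vietoris topology on `CL X`, with subbase `{U⁻ : U open} ∪ {U⁺ : U open}`. -/
def vietoris (X : Type u) [TopologicalSpace X] : TopologicalSpace (CL X) :=
  TopologicalSpace.generateFrom
    ({ S | ∃ U : Set X, IsOpen U ∧ S = { A : CL X | (A.1 ∩ U).Nonempty } } ∪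
     { S | ∃ U : Set X, IsOpen U ∧ S = { A : CL X | A.1 ⊆ U } })

/-- The subspace topology on a subset. -/
def subTop {Y : Type u} (t : TopologicalSpace Y) (S : Set Y) : TopologicalSpace ↥S :=
  TopologicalSpace.induced Subtype.val t

section CardinalFunctions

variable (Y : Type u) (t : TopologicalSpace Y)

/-- `ℬ` is a base of the topology `t`. -/
def IsBase (ℬ : Set (Set Y)) : Prop :=
  (∀ U ∈ ℬ, t.IsOpen U) ∧ ∀ U, t.IsOpen U → ∀ x ∈ U, ∃ V ∈ ℬ, x ∈ V ∧ V ⊆ U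

/-- The weight: `ℵ₀` plus the least cardinality of a base. -/
noncomputable def weight : Cardinal.{u} :=
  ℵ₀ + sInf { c : Cardinal.{u} | ∃ ℬ : Set (Set Y), IsBase Y t ℬ ∧ #↥ℬ = c }

/-- The density: `ℵ₀` plus the least cardinality of a dense subset. -/
noncomputable def density : Cardinal.{u} :=
  ℵ₀ + sInf { c : Cardinal.{u} | ∃ D : Set Y, @Dense Y t D ∧ #↥D = c }

/-- A π-base: a family of nonempty open sets such that every nonempty open set
contains a member. -/
def IsPiBase (𝒢 : Set (Set Y)) : Prop :=
  (∀ G ∈ 𝒢, t.IsOpen G ∧ G.Nonempty) ∧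
    ∀ U : Set Y, t.IsOpen U → U.Nonempty → ∃ G ∈ 𝒢, G ⊆ U

/-- The π-weight: `ℵ₀` plus the least cardinality of a π-base. -/
noncomputable def piWeight : Cardinal.{u} :=
  ℵ₀ + sInf { c : Cardinal.{u} | ∃ 𝒢 : Set (Set Y), IsPiBase Y t 𝒢 ∧ #↥𝒢 = c }

/-- A local π-base at `y`: a family of nonempty open sets such that every open
neighborhood of `y` contains a member. -/
def IsLocalPiBase (y : Y) (𝒢 : Set (Set Y)) : Prop :=
  (∀ G ∈ 𝒢, t.IsOpen G ∧ G.Nonempty) ∧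
    ∀ U : Set Y, t.IsOpen U → y ∈ U → ∃ G ∈ 𝒢, G ⊆ U

/-- The π-character at a point. -/
noncomputable def piCharacterAt (y : Y) : Cardinal.{u} :=
  ℵ₀ + sInf { c : Cardinal.{u} | ∃ 𝒢 : Set (Set Y), IsLocalPiBase Y t y 𝒢 ∧ #↥𝒢 = c }

/-- The π-character of the space. -/
noncomputable def piCharacter : Cardinal.{u} := ⨆ y : Y, piCharacterAt Y t y

/-- The pseudocharacter at a point: `ℵ₀` plus the least cardinality of a family of
open sets whose intersection is `{y}`. -/
noncomputable def pseudoCharacterAt (y : Y) : Cardinal.{u} :=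
  ℵ₀ + sInf { c : Cardinal.{u} | ∃ 𝒰 : Set (Set Y),
    (∀ U ∈ 𝒰, t.IsOpen U) ∧ ⋂₀ 𝒰 = {y} ∧ #↥𝒰 = c }

/-- The pseudocharacter of the space. -/
noncomputable def pseudoCharacter : Cardinal.{u} := ⨆ y : Y, pseudoCharacterAt Y t y

/-- The pseudoweight: `ℵ₀` plus the least cardinality of a point-separating family
of open sets. -/
noncomputable def pseudoWeight : Cardinal.{u} :=
  ℵ₀ + sInf { c : Cardinal.{u} | ∃ 𝒰 : Set (Set Y), (∀ U ∈ 𝒰, t.IsOpen U) ∧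
    (∀ x y : Y, x ≠ y → ∃ U ∈ 𝒰, (x ∈ U ∧ y ∉ U) ∨ (y ∈ U ∧ x ∉ U)) ∧ #↥𝒰 = c }

/-- The net weight: `ℵ₀` plus the least cardinality of a network. -/
noncomputable def netWeight : Cardinal.{u} :=
  ℵ₀ + sInf { c : Cardinal.{u} | ∃ 𝒩 : Set (Set Y),
    (∀ U : Set Y, t.IsOpen U → ∀ x ∈ U, ∃ M ∈ 𝒩, x ∈ M ∧ M ⊆ U) ∧ #↥𝒩 = c }

/-- The tightness at a point. -/
noncomputable def tightnessAt (y : Y) : Cardinal.{u} :=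
  ℵ₀ + sInf { κ : Cardinal.{u} | ∀ A : Set Y, y ∈ @closure Y t A →
      ∃ B ⊆ A, #↥B ≤ κ ∧ y ∈ @closure Y t B }

/-- The tightness of the space. -/
noncomputable def tightness : Cardinal.{u} := ⨆ y : Y, tightnessAt Y t y

/-- The Lindelöf number. -/
noncomputable def lindelofNumber : Cardinal.{u} :=
  ℵ₀ + sInf { κ : Cardinal.{u} | ∀ 𝒞 : Set (Set Y), (∀ U ∈ 𝒞, t.IsOpen U) →
      ⋃₀ 𝒞 = Set.univ → ∃ 𝒟 ⊆ 𝒞, #↥𝒟 ≤ κ ∧ ⋃₀ 𝒟 = Set.univ }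

/-- The extent: `ℵ₀` plus the supremum of the cardinalities of closed discrete
subspaces. -/
noncomputable def extent : Cardinal.{u} :=
  ℵ₀ + sSup { c : Cardinal.{u} | ∃ D : Set Y, @IsClosed Y t D ∧
    @DiscreteTopology ↥D (subTop t D) ∧ #↥D = c }

/-- The spread: `ℵ₀` plus the supremum of the cardinalities of discrete subspaces. -/
noncomputable def spread : Cardinal.{u} :=
  ℵ₀ + sSup { c : Cardinal.{u} | ∃ D : Set Y,
    @DiscreteTopology ↥D (subTop t D) ∧ #↥D = c }

/-- The diagonal degree: `ℵ₀` plus the least cardinality of a family of open subsets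
of `Y × Y` whose intersection is the diagonal. -/
noncomputable def diagonalDegree : Cardinal.{u} :=
  ℵ₀ + sInf { c : Cardinal.{u} | ∃ 𝒢 : Set (Set (Y × Y)),
    (∀ G ∈ 𝒢, @IsOpen (Y × Y) (@instTopologicalSpaceProd Y Y t t) G) ∧
    ⋂₀ 𝒢 = { p : Y × Y | p.1 = p.2 } ∧ #↥𝒢 = c }

/-- The uniform weight: `ℵ₀` plus the least cardinality of a base of a compatible
uniformity. -/
noncomputable def uniformWeight : Cardinal.{u} :=
  ℵ₀ + sInf { c : Cardinal.{u} | ∃ U : UniformSpace Y, U.toTopologicalSpace = t ∧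
    ∃ 𝒲 : Set (Set (Y × Y)), (∀ W ∈ 𝒲, W ∈ @uniformity Y U) ∧
      (∀ s ∈ @uniformity Y U, ∃ W ∈ 𝒲, W ⊆ s) ∧ #↥𝒲 = c }

/-- The weak weight: the least weight of a Tychonoff space onto which `Y` maps by a
continuous bijection. -/
noncomputable def weakWeight : Cardinal.{u} :=
  sInf { c : Cardinal.{u} | ∃ (Z : Type u) (s : TopologicalSpace Z) (f : Y → Z),
    @T35Space Z s ∧ @Continuous Y Z t s f ∧ Function.Bijective f ∧ weight Z s = c }

end CardinalFunctions

/-- The hereditary version of a cardinal function: the supremum over all subspaces. -/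
noncomputable def hered (f : (Z : Type u) → TopologicalSpace Z → Cardinal.{u})
    (Y : Type u) (t : TopologicalSpace Y) : Cardinal.{u} :=
  ⨆ S : Set Y, f ↥S (subTop t S)

theorem exists_uncountable_separated {X : Type u} [MetricSpace X]
    (hX : ¬ TopologicalSpace.SeparableSpace X) :
    ∃ δ > 0, ∃ E : Set X, E.Pairwise (fun x y => δ < dist x y) ∧ ¬ E.Countable := by
  by_contra! hcon
  refine hX ?_
  have : SecondCountableTopology X := by
    refine Metric.secondCountable_of_almost_dense_set fun ε hε => ?_
    obtain ⟨E, hE⟩ := zorn_subset {E : Set X | E.Pairwise fun x y => ε < dist x y} (by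
      intro c hc hchain
      exact ⟨⋃₀ c, (pairwise_sUnion hchain.directedOn).2 hc, fun s hs => subset_sUnion_of_mem hs⟩)
    refine ⟨E, hcon ε hε E hE.prop, fun x => ?_⟩
    by_contra! hx
    have hins : (insert x E).Pairwise fun x y => ε < dist x y :=
      hE.prop.insert fun y hy _ => ⟨hx y hy, dist_comm x y ▸ hx y hy⟩
    have hxE : x ∈ E := hE.le_of_ge hins (subset_insert x E) (mem_insert x E)
    have := hx x hxE
    rw [dist_self] at this
    linarith
  infer_instance

theorem finite_of_separated {X : Type u} [MetricSpace X] {δ : ℝ} (hδ : 0 < δ) {K : Set X}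
    (hK : K.Pairwise fun x y => δ < dist x y) (hb : TotallyBounded K) : K.Finite := by
  obtain ⟨t, ht, hcov⟩ := Metric.totallyBounded_iff.1 hb (δ / 2) (by linarith)
  -- Each of the finitely many covering balls contains at most one point of `K`.
  refine (ht.biUnion (t := fun c => K ∩ ball c (δ / 2)) fun c _ => ?_).subset fun x hx => ?_
  · refine Set.Subsingleton.finite fun x hx y hy => ?_
    by_contra hne
    have h1 := hK hx.1 hy.1 hne
    have h2 := dist_triangle_right x y c
    have h3 := mem_ball.1 hx.2
    have h4 := mem_ball.1 hy.2
    linarith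
  · obtain ⟨c, hc, hxc⟩ := mem_iUnion₂.1 (hcov hx)
    exact mem_biUnion hc ⟨hx, hxc⟩

/-- If `E` meets each closed ball that misses some point in a finite set, then all but countably
many points of `E` are at the maximal distance from `x`. -/
theorem countable_not_farthest {X : Type u} [MetricSpace X] {E : Set X}
    (hfin : ∀ (x z : X) (r : ℝ), r < dist x z → (E ∩ closedBall x r).Finite) (x : X) :
    {y | y ∈ E ∧ ∃ z, dist x y < dist x z}.Countable := by
  have hq : ∀ q : ℚ, {y | y ∈ E ∧ ∃ z, dist x y < q ∧ q < dist x z}.Countable := by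
    intro q
    by_cases hz : ∃ z, (q : ℝ) < dist x z
    · obtain ⟨z, hz⟩ := hz
      refine ((hfin x z q hz).subset ?_).countable
      rintro y ⟨hy, -, hyq, -⟩
      exact ⟨hy, by rw [mem_closedBall, dist_comm]; exact hyq.le⟩
    · convert countable_empty (α := X)
      ext y
      simp only [mem_ofPred_eq, mem_empty_iff_false, iff_false]
      rintro ⟨-, z, -, h⟩
      exact hz ⟨z, h⟩
  refine (countable_iUnion hq).mono ?_
  rintro y ⟨hy, z, hz⟩
  obtain ⟨q, h1, h2⟩ := exists_rat_btwn hz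
  exact mem_iUnion.2 ⟨q, hy, z, h1, h2⟩

/-- The one-point set `{y}` as a point of the hyperspace. -/
def singletonCL {X : Type u} [MetricSpace X] (y : X) : CL X :=
  ⟨{y}, singleton_nonempty y, isClosed_singleton⟩

/-- The set `{y, z}` as a point of the hyperspace. -/
def pairCL {X : Type u} [MetricSpace X] (y z : X) : CL X :=
  ⟨{y, z}, insert_nonempty y {z}, (toFinite {y, z}).isClosed⟩

theorem infDist_singletonCL {X : Type u} [MetricSpace X] (x y : X) :
    infDist x (singletonCL y).1 = dist x y :=
  infDist_singleton

theorem infDist_pairCL {X : Type u} [MetricSpace X] (x y z : X) :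
    infDist x (pairCL y z).1 = min (dist x y) (dist x z) := by
  refine le_antisymm (le_min ?_ ?_) ?_
  · exact infDist_le_dist_of_mem (mem_insert y {z})
  · exact infDist_le_dist_of_mem (mem_insert_of_mem y rfl)
  · refine (le_infDist (insert_nonempty y {z})).2 ?_
    rintro w (rfl | rfl)
    · exact min_le_left _ _
    · exact min_le_right _ _

theorem wijsman_eq_induced {X : Type u} [m : MetricSpace X] :
    wijsman X m = TopologicalSpace.induced (fun (A : CL X) (x : X) => infDist x A.1)
      Pi.topologicalSpace := by
  simp only [wijsman, Pi.topologicalSpace, induced_iInf, induced_compose]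
  rfl

theorem continuous_infDist_CL {X : Type u} [m : MetricSpace X] (x : X) :
    @Continuous (CL X) ℝ (wijsman X m) _ fun A => infDist x A.1 :=
  continuous_iff_le_induced.2 (iInf_le _ x)

/-- Every Wijsman-open set around `A` is controlled by finitely many distance functionals; the
tolerance `e` may depend on the functional, which avoids taking a minimum. -/
theorem exists_basic_nhd {X : Type u} [m : MetricSpace X] {U : Set (CL X)}
    (hU : IsOpen[wijsman X m] U) {A : CL X} (hA : A ∈ U) :
    ∃ (F : Finset X) (e : X → ℝ), (∀ x, 0 < e x) ∧
      ∀ B : CL X, (∀ x ∈ F, |infDist x B.1 - infDist x A.1| < e x) → B ∈ U := by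
  rw [wijsman_eq_induced, isOpen_induced_iff] at hU
  obtain ⟨W, hW, rfl⟩ := hU
  obtain ⟨F, u, hu, hFW⟩ := isOpen_pi_iff.1 hW _ hA
  have hex : ∀ x, ∃ ε > 0, x ∈ F → ball (infDist x A.1) ε ⊆ u x := by
    intro x
    by_cases hx : x ∈ F
    · obtain ⟨ε, hε, hs⟩ := Metric.isOpen_iff.1 (hu x hx).1 _ (hu x hx).2
      exact ⟨ε, hε, fun _ => hs⟩
    · exact ⟨1, one_pos, fun hx' => absurd hx' hx⟩
  choose e he hs using hex
  exact ⟨F, e, he, fun B hB => hFW fun x hx => hs x hx (hB x hx)⟩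

theorem isClosed_singletonCL {X : Type u} [m : MetricSpace X] (y : X) :
    IsClosed[wijsman X m] {B : CL X | B.1 = {y}} := by
  let _ := wijsman X m
  have : {B : CL X | B.1 = {y}} = ⋂ x : X, {B : CL X | infDist x B.1 = dist x y} := by
    ext B
    simp only [mem_ofPred_eq, mem_iInter]
    constructor
    · intro hB x
      rw [hB, infDist_singleton]
    · intro hB
      refine B.2.1.subset_singleton_iff.1 fun x hx => ?_
      have := hB x
      rw [infDist_zero_of_mem hx] at this
      exact dist_eq_zero.1 this.symm
  rw [this]
  exact isClosed_iInter fun x => isClosed_eq (continuous_infDist_CL x) continuous_const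

theorem isClosed_singletons {X : Type u} [m : MetricSpace X] {T : Set X}
    (hT : ∀ a : X, ∃ r > 0, (T ∩ closedBall a r).Finite) :
    IsClosed[wijsman X m] {A : CL X | ∃ y ∈ T, A.1 = {y}} := by
  let _ := wijsman X m
  rw [← isOpen_compl_iff, isOpen_iff_forall_mem_open]
  intro A hA
  obtain ⟨a, ha⟩ := A.2.1
  obtain ⟨r, hr, hfin⟩ := hT a
  -- Near `A`, only the finitely many `{y}` with `y` in the ball around `a ∈ A` can occur.
  refine ⟨{B | infDist a B.1 < r} ∩ (⋃ y ∈ T ∩ closedBall a r, {B : CL X | B.1 = {y}})ᶜ,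
    ?_, ?_, ?_, ?_⟩
  · rintro B ⟨hBr, hB⟩ ⟨y, hy, hBy⟩
    refine hB (mem_biUnion ⟨hy, ?_⟩ hBy)
    rw [mem_ofPred_eq, hBy, infDist_singleton] at hBr
    rw [mem_closedBall, dist_comm]
    exact hBr.le
  · exact (isOpen_lt (continuous_infDist_CL a) continuous_const).inter
      (hfin.isClosed_biUnion fun y _ => isClosed_singletonCL y).isOpen_compl
  · rw [mem_ofPred_eq, infDist_zero_of_mem ha]
    exact hr
  · intro hmem
    obtain ⟨y, hy, hAy⟩ := mem_iUnion₂.1 hmem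
    exact hA ⟨y, hy.1, hAy⟩

/-- if every proper closed ball of `(X,ρ)` is totally bounded and
`(CL(X), W_ρ)` is normal, then `X` is separable. -/
theorem stmt_15 (X : Type u) [MetricSpace X]
    (h : ∀ (x : X) (α : ℝ), closedBall x α ≠ Set.univ →
      TotallyBounded (closedBall x α))
    (hn : @NormalSpace (CL X) (wijsman X ‹MetricSpace X›)) :
    TopologicalSpace.SeparableSpace X := by
  by_contra hsep
  let _ := wijsman X ‹MetricSpace X›
  obtain ⟨δ, hδ, E, hE, hunc⟩ := exists_uncountable_separated hsep
  have hfin : ∀ (x z : X) (r : ℝ), r < dist x z → (E ∩ closedBall x r).Finite := by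
    intro x z r hr
    refine finite_of_separated hδ (hE.mono inter_subset_left)
      (TotallyBounded.subset inter_subset_right (h x r ?_))
    intro hu
    have : z ∈ closedBall x r := hu ▸ mem_univ z
    rw [mem_closedBall, dist_comm] at this
    linarith
  have hcount := countable_not_farthest hfin
  obtain ⟨S, hSE, hSinf, hScount⟩ : ∃ S ⊆ E, S.Infinite ∧ S.Countable := by
    have hinf : E.Infinite := fun hf => hunc hf.countable
    obtain ⟨f⟩ : Nonempty (ℕ ↪ E) := ⟨hinf.natEmbedding⟩
    refine ⟨range fun n => (f n : X), ?_, ?_, countable_range _⟩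
    · rintro _ ⟨n, rfl⟩; exact (f n).2
    · exact infinite_range_of_injective (Subtype.val_injective.comp f.injective)
  have hsmall : ∀ a : X, ∃ r > 0, (E ∩ closedBall a r).Finite := by
    intro a
    obtain ⟨b, -, hb⟩ : ∃ b ∈ E, b ∉ ({a} : Set X) := by
      by_contra! hcon
      exact hunc ((countable_singleton a).mono hcon)
    have hpos : 0 < dist a b := dist_pos.2 fun hab => hb hab.symm
    exact ⟨dist a b / 2, by linarith, hfin a b _ (by linarith)⟩
  have hclosed : ∀ T ⊆ E, IsClosed {A : CL X | ∃ y ∈ T, A.1 = {y}} := fun T hT =>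
    isClosed_singletons fun a => by
      obtain ⟨r, hr, hf⟩ := hsmall a
      exact ⟨r, hr, hf.subset (inter_subset_inter_left _ hT)⟩
  obtain ⟨U, V, hU, hV, hSU, hTV, hUV⟩ :=
    normal_separation (hclosed S hSE) (hclosed (E \ S) sdiff_subset) (by
      rw [disjoint_left]
      rintro A ⟨y, hy, hAy⟩ ⟨z, hz, hAz⟩
      rw [hAy, singleton_eq_singleton_iff] at hAz
      exact hz.2 (hAz ▸ hy))
  choose! F e he hFU using fun (y : X) (hy : y ∈ S) =>
    exists_basic_nhd hU (A := singletonCL y) (hSU ⟨y, hy, rfl⟩)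
  -- `β` is a farthest point of `X` from each of the countably many `x` controlling
  -- the neighborhoods chosen for the points of `S`.
  obtain ⟨β, ⟨hβE, hβS⟩, hβ⟩ : ∃ β ∈ E \ S, ∀ y ∈ S, ∀ x ∈ F y, ∀ z, dist x z ≤ dist x β := by
    by_contra! hcon
    refine hunc ((hScount.union (hScount.biUnion fun y _ =>
      (F y).countable_toSet.biUnion fun x _ => hcount x)).mono fun β hβE => ?_)
    by_cases hβS : β ∈ S
    · exact .inl hβS
    · obtain ⟨y, hy, x, hx, z, hz⟩ := hcon β ⟨hβE, hβS⟩
      exact .inr (mem_biUnion hy (mem_biUnion hx ⟨hβE, z, hz⟩))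
  obtain ⟨G, d, hd, hGV⟩ :=
    exists_basic_nhd hV (A := singletonCL β) (hTV ⟨β, ⟨hβE, hβS⟩, rfl⟩)
  -- Only finitely many points of `S` are too close to a point controlling the
  -- neighborhood of `{β}`.
  obtain ⟨α, hαS, hα⟩ : ∃ α ∈ S, ∀ x ∈ G, dist x β - d x < dist x α := by
    by_contra! hcon
    refine hSinf ((G.finite_toSet.biUnion fun x _ =>
      hfin x β (dist x β - d x) (by linarith [hd x])).subset fun α hα => ?_)
    obtain ⟨x, hx, hle⟩ := hcon α hα
    exact mem_biUnion hx ⟨hSE hα, by rwa [mem_closedBall, dist_comm]⟩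
  refine disjoint_left.1 hUV (hFU α hαS (pairCL α β) fun x hx => ?_)
    (hGV (pairCL α β) fun x hx => ?_)
  · rw [infDist_pairCL, infDist_singletonCL, min_eq_left (hβ α hαS x hx α), sub_self, abs_zero]
    exact he α hαS x
  · rw [infDist_pairCL, infDist_singletonCL, abs_lt]
    have hdx := hd x
    constructor
    · have := lt_min (hα x hx) (by linarith : dist x β - d x < dist x β)
      linarith
    · linarith [min_le_right (dist x α) (dist x β)]
end

section
/- Let γ ≥ ℵ₀ be a regular cardinal (cf(γ) = γ). Let (X,ρ) be a metric space such that for every ε > 0, every proper closed ball of X (closed ball B(x,α) = {y : ρ(x,y) ≤ α} with B(x,α) ≠ X) can be covered by fewer than γ open balls of radius ε. If (CL(X), W_ρ) is a normal topological space, then d(X) ≤ γ. -/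
/-!
Suppose `d(X) > γ`. The complement of the set of points `z` at maximal distance from a given `x` is
a countable union of proper closed balls, hence coverable by at most `γ` balls of any given radius.
So for every `T ⊆ X` with `#T ≤ γ` there is a point `z` which is farthest from every `x ∈ T`
simultaneously (`exists_farthest`).

A maximal `ε`-separated set has more than `γ` points for some `ε`; choose disjoint subsets `I`, `J`
of it of cardinality `γ`. Points embed as singletons onto a closed subspace of `CL X`, so
`{{y} : y ∈ I}` and `{{y} : y ∈ J}` are disjoint closed sets. Let `U`, `V` be open sets containing
them, with disjoint closures. Membership of `{y}` in `U` (or `V`) is decided by finitely many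
distance functionals; let `T` collect the at most `γ` points involved for all `y ∈ I ∪ J`, and let
`z` be farthest from all of `T`. Then `{y, z}` agrees with `{y}` on those functionals, so
`{y, z} ∈ U` for `y ∈ I` and `{y, z} ∈ V` for `y ∈ J`.

Finally `{y, z} → {z}` as `y` runs through `I` (or `J`) along the filter of sets with complement of
size `< γ`: for each `x` and `δ > 0` the ball `closedBall x (dist x z - δ)` is proper as it misses
`z`, hence contains fewer than `γ` points of a separated set (`tendsto_pair`).
So `{z}` lies in both closures, a contradiction.
-/

open Cardinal Set Metric Topology

universe u v

section Wijsman

variable {X : Type u} [MetricSpace X]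

/-- The Wijsman topology of the ambient metric, in a form usable as an instance. -/
noncomputable abbrev wijsmanTopology : TopologicalSpace (CL X) := wijsman X inferInstance

attribute [local instance] wijsmanTopology

/-! ### Density and covers by balls -/

/-- A metric space coverable by at most `γ` balls of each radius has density at most `γ`. -/
theorem density_le_of_covers {γ : Cardinal.{u}} (hγ : ℵ₀ ≤ γ)
    (H : ∀ ε > (0:ℝ), ∃ S : Set X, #↥S ≤ γ ∧ ∀ x, ∃ c ∈ S, dist x c < ε) :
    density X inferInstance ≤ γ := by
  choose S hS hc using fun n : ℕ => H (1 / ((n:ℝ) + 1)) (by positivity)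
  have hcard : #↥(⋃ n, S n) ≤ γ := by
    have := mk_iUnion_le_lift.{u, 0} S
    rw [lift_id'.{0, u}] at this
    refine this.trans ?_
    refine (mul_le_max _ _).trans ?_
    refine max_le (max_le (by simpa using hγ) ?_) hγ
    exact ciSup_le' fun n => by simpa using hS n
  have hd : Dense (⋃ n, S n) := by
    rw [Metric.dense_iff]
    intro x r hr
    obtain ⟨n, hn⟩ := exists_nat_one_div_lt hr
    obtain ⟨c, hcS, hcd⟩ := hc n x
    exact ⟨c, by rw [mem_ball']; linarith, mem_iUnion.2 ⟨n, hcS⟩⟩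
  unfold density
  refine add_le_of_le hγ hγ (le_trans (csInf_le' ?_) hcard)
  exact ⟨_, hd, rfl⟩

/-- If the density exceeds `γ`, some separated set has more than `γ` points. -/
theorem exists_separated {γ : Cardinal.{u}} (hγ : ℵ₀ ≤ γ)
    (hd : ¬ density X inferInstance ≤ γ) :
    ∃ ε > (0:ℝ), ∃ D : Set X, γ < #↥D ∧ D.Pairwise fun x y => ε ≤ dist x y := by
  by_contra! hcon
  refine hd (density_le_of_covers hγ fun ε hε => ?_)
  obtain ⟨D, hD⟩ := zorn_subset {D : Set X | D.Pairwise fun x y => ε ≤ dist x y} (by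
    intro c hc hchain
    refine ⟨⋃₀ c, ?_, fun s hs => subset_sUnion_of_mem hs⟩
    exact (pairwise_sUnion hchain.directedOn).2 fun s hs => hc hs)
  refine ⟨D, not_lt.1 fun hlt => hcon ε hε D hlt hD.prop, fun x => ?_⟩
  by_contra! hx
  have hins : (insert x D).Pairwise fun x y => ε ≤ dist x y := by
    refine hD.prop.insert fun b hb _ => ⟨hx b hb, ?_⟩
    rw [dist_comm]; exact hx b hb
  have hxD : x ∈ D := hD.le_of_ge (y := insert x D) hins (subset_insert x D) (mem_insert x D)
  have := hx x hxD
  rw [dist_self] at this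
  linarith

/-- A simultaneous farthest point for `γ` many points. If `z` is not farthest from `x` then some
proper closed ball around `x` of rational radius contains `z`, so failure would cover `X` by `γ`
proper balls. -/
theorem exists_farthest {γ : Cardinal.{u}} (hγ : ℵ₀ ≤ γ)
    (h : ∀ ε > (0:ℝ), ∀ (x : X) (α : ℝ), closedBall x α ≠ Set.univ →
      ∃ S : Set X, #↥S < γ ∧ closedBall x α ⊆ ⋃ c ∈ S, ball c ε)
    (hd : ¬ density X inferInstance ≤ γ) (T : Set X) (hT : #↥T ≤ γ) :
    ∃ z : X, ∀ x ∈ T, ∀ y, dist x y ≤ dist x z := by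
  by_contra! hcon
  refine hd (density_le_of_covers hγ fun ε hε => ?_)
  have hS : ∀ p : T × ℚ, ∃ S : Set X, #↥S ≤ γ ∧
      (closedBall (p.1 : X) (p.2 : ℝ) ≠ Set.univ →
        closedBall (p.1 : X) (p.2 : ℝ) ⊆ ⋃ c ∈ S, ball c ε) := by
    intro p
    by_cases hp : closedBall (p.1 : X) (p.2 : ℝ) ≠ Set.univ
    · obtain ⟨S, h1, h2⟩ := h ε hε _ _ hp
      exact ⟨S, h1.le, fun _ => h2⟩
    · exact ⟨∅, by simp, fun h' => absurd h' hp⟩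
  choose S hScard hScov using hS
  refine ⟨⋃ p, S p, ?_, fun z => ?_⟩
  · refine (mk_iUnion_le S).trans ?_
    refine (mul_le_max _ _).trans (max_le (max_le ?_ (ciSup_le' hScard)) hγ)
    simp only [mk_prod, mk_eq_aleph0 ℚ, lift_aleph0, lift_uzero]
    exact (mul_le_max _ _).trans (max_le (max_le hT hγ) hγ)
  · obtain ⟨x, hx, y, hy⟩ := hcon z
    obtain ⟨q, hq1, hq2⟩ := exists_rat_btwn hy
    have hmem : z ∈ closedBall x (q : ℝ) := by rw [mem_closedBall']; exact hq1.le
    have hprop : closedBall x (q : ℝ) ≠ Set.univ := by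
      intro he
      have : y ∈ closedBall x (q : ℝ) := he ▸ mem_univ y
      rw [mem_closedBall'] at this
      linarith
    obtain ⟨c, hc, hcz⟩ := mem_iUnion₂.1 (hScov (⟨x, hx⟩, q) hprop hmem)
    exact ⟨c, mem_iUnion.2 ⟨_, hc⟩, hcz⟩

/-! ### The Wijsman topology on singletons and pairs -/

/-- The singleton `{x}` as a point of the hyperspace. -/
def single (x : X) : CL X := ⟨{x}, singleton_nonempty x, isClosed_singleton⟩

/-- The set `{x, y}` as a point of the hyperspace. -/
def pair (x y : X) : CL X := ⟨{x, y}, insert_nonempty x _, (Set.toFinite _).isClosed⟩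

theorem infDist_pair (x y z : X) : infDist x (pair y z).1 = min (dist x y) (dist x z) := by
  refine le_antisymm (le_min ?_ ?_) ?_
  · exact infDist_le_dist_of_mem (by simp [pair])
  · exact infDist_le_dist_of_mem (by simp [pair])
  · rw [le_infDist (pair y z).2.1]
    rintro w (rfl | hw)
    · exact min_le_left _ _
    · rw [mem_singleton_iff.1 hw]; exact min_le_right _ _

theorem infDist_single (x y : X) : infDist x (single y).1 = dist x y := infDist_singleton

theorem isInducing_wijsman :
    IsInducing (fun (A : CL X) (x : X) => infDist x A.1) :=
  inducing_iInf_to_pi fun (x : X) (A : CL X) => infDist x A.1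

theorem continuous_wijsman (x : X) : Continuous fun A : CL X => infDist x A.1 :=
  (continuous_apply x).comp isInducing_wijsman.continuous

/-- Membership in a Wijsman-open set is witnessed by finitely many distance functionals. -/
theorem exists_finite_of_open {U : Set (CL X)} (hU : IsOpen U) {A : CL X} (hA : A ∈ U) :
    ∃ F : Set X, F.Finite ∧ ∀ C : CL X, (∀ x ∈ F, infDist x C.1 = infDist x A.1) → C ∈ U := by
  have hmem := hU.mem_nhds hA
  rw [isInducing_wijsman.nhds_eq_comap, Filter.mem_comap] at hmem
  obtain ⟨t, ht, htU⟩ := hmem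
  rw [nhds_pi, Filter.mem_pi] at ht
  obtain ⟨F, hF, s, hs, hst⟩ := ht
  refine ⟨F, hF, fun C hC => htU (hst fun x hx => ?_)⟩
  change infDist x C.1 ∈ s x
  rw [hC x hx]
  exact mem_of_mem_nhds (hs x)

/-- The singletons of a closed set form a closed subset of the hyperspace: a set with two points
`a ≠ b` is not a limit of singletons, since a single point is not near both `a` and `b`. -/
theorem isClosed_singles {I : Set X} (hI : IsClosed I) : IsClosed (single '' I) := by
  rw [← isOpen_compl_iff, isOpen_iff_mem_nhds]
  intro A hA
  obtain ⟨a, ha⟩ := A.2.1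
  have near : ∀ b ∈ A.1, ∀ δ > (0:ℝ), ∀ᶠ C : CL X in 𝓝 A, infDist b C.1 < δ := by
    intro b hb δ hδ
    refine (continuous_wijsman b).continuousAt.eventually_lt_const ?_
    change infDist b A.1 < δ
    rwa [infDist_zero_of_mem hb]
  by_cases hs : ∃ b ∈ A.1, b ≠ a
  · obtain ⟨b, hb, hba⟩ := hs
    have hpos : 0 < dist b a / 2 := half_pos (dist_pos.2 hba)
    filter_upwards [near a ha _ hpos, near b hb _ hpos] with C h1 h2
    rintro ⟨y, -, rfl⟩
    rw [infDist_single] at h1 h2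
    have := dist_triangle_right b a y
    linarith
  · push Not at hs
    have haI : a ∉ I := by
      intro haI
      refine hA ⟨a, haI, Subtype.ext ?_⟩
      exact (eq_singleton_iff_unique_mem.2 ⟨ha, hs⟩).symm
    obtain ⟨δ, hδ, hball⟩ := Metric.isOpen_iff.1 hI.isOpen_compl a haI
    filter_upwards [near a ha δ hδ] with C h1
    rintro ⟨y, hy, rfl⟩
    rw [infDist_single] at h1
    exact hball (mem_ball'.2 h1) hy

/-- The pairs `{y, z}` converge to `{z}` as `y` leaves all subsets of size `< γ` of a separated
set. -/
theorem tendsto_pair {γ : Cardinal.{u}} (hγ : γ.IsRegular)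
    (h : ∀ ε > (0:ℝ), ∀ (x : X) (α : ℝ), closedBall x α ≠ Set.univ →
      ∃ S : Set X, #↥S < γ ∧ closedBall x α ⊆ ⋃ c ∈ S, ball c ε)
    {ε : ℝ} (hε : 0 < ε) {I : Set X} (hI : I.Pairwise fun x y => ε ≤ dist x y) (z : X) :
    Filter.Tendsto (fun y : I => pair (y : X) z) (Filter.cocardinal I hγ) (𝓝 (single z)) := by
  rw [isInducing_wijsman.tendsto_nhds_iff, tendsto_pi_nhds]
  intro x
  simp only [Function.comp_def, infDist_pair, infDist_single]
  rw [Metric.tendsto_nhds]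
  intro δ hδ
  rw [Filter.eventually_cocardinal]
  have hprop : closedBall x (dist x z - δ) ≠ Set.univ := by
    intro he
    have : z ∈ closedBall x (dist x z - δ) := he ▸ mem_univ z
    rw [mem_closedBall'] at this
    linarith
  obtain ⟨S, hS, hcov⟩ := h (ε / 2) (half_pos hε) x _ hprop
  have hbad : ∀ y : {y : I | ¬ dist (min (dist x (y : X)) (dist x z)) (dist x z) < δ},
      ∃ c : S, dist (y : X) c < ε / 2 := by
    rintro ⟨y, hy⟩
    have hle : dist x (y : X) ≤ dist x z - δ := by
      by_contra! hlt
      refine hy ?_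
      rw [Real.dist_eq, abs_lt]
      rcases min_cases (dist x (y : X)) (dist x z) with h' | h' <;> constructor <;> linarith
    obtain ⟨c, hc, hyc⟩ := mem_iUnion₂.1 (hcov (mem_closedBall'.2 hle))
    exact ⟨⟨c, hc⟩, hyc⟩
  choose f hf using hbad
  refine (mk_le_of_injective (f := f) fun y y' hyy => ?_).trans_lt hS
  -- a ball of radius `ε / 2` contains at most one point of an `ε`-separated set
  by_contra hne
  have hsep := hI y.1.2 y'.1.2 (fun he => hne (Subtype.ext (Subtype.ext he)))
  have h1 := hf y
  have h2 := hf y'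
  rw [← hyy] at h2
  have := dist_triangle_right (y.1.1 : X) y'.1.1 (f y).1
  linarith

/-- If `I` is separated of size `γ` and `{y, z} ∈ U` for all `y ∈ I`, then `{z}` is in the closure
of `U`. -/
theorem single_mem_closure {γ : Cardinal.{u}} (hγ : γ.IsRegular)
    (h : ∀ ε > (0:ℝ), ∀ (x : X) (α : ℝ), closedBall x α ≠ Set.univ →
      ∃ S : Set X, #↥S < γ ∧ closedBall x α ⊆ ⋃ c ∈ S, ball c ε)
    {ε : ℝ} (hε : 0 < ε) {I : Set X} (hI : I.Pairwise fun x y => ε ≤ dist x y)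
    (hIγ : #↥I = γ) {z : X} {U : Set (CL X)} (hU : ∀ y : I, pair (y : X) z ∈ U) :
    single z ∈ closure U := by
  have : (Filter.cocardinal I hγ).NeBot := by
    rw [Filter.neBot_iff, Ne, ← Filter.empty_mem_iff_bot, Filter.mem_cocardinal, compl_empty, mk_univ, hIγ]
    exact lt_irrefl γ
  exact mem_closure_of_tendsto (tendsto_pair hγ h hε hI z) (Filter.Eventually.of_forall hU)

/-- That `γ` many singletons `{y}` lie in an open set `U` depends on a set `T` of at most `γ` distance
functionals in total; adding to each `{y}` a point `z` farthest from all of `T` does not change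
them. -/
theorem exists_support {γ : Cardinal.{u}} (hγ : ℵ₀ ≤ γ) {I : Set X} (hIγ : #↥I = γ)
    {U : Set (CL X)} (hU : IsOpen U) (hIU : single '' I ⊆ U) :
    ∃ T : Set X, #↥T ≤ γ ∧
      ∀ z, (∀ x ∈ T, ∀ y, dist x y ≤ dist x z) → ∀ y : I, pair (y : X) z ∈ U := by
  choose F hF hFU using fun y : I => exists_finite_of_open hU (hIU (mem_image_of_mem single y.2))
  refine ⟨⋃ y, F y, ?_, fun z hz y => hFU y _ fun x hx => ?_⟩
  · refine (mk_iUnion_le F).trans ((mul_le_max _ _).trans (max_le (max_le hIγ.le ?_) hγ))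
    exact ciSup_le' fun y => ((hF y).lt_aleph0.le).trans hγ
  · rw [infDist_pair, infDist_single]
    exact min_eq_left (hz x (mem_iUnion.2 ⟨y, hx⟩) y)

end Wijsman

/-- let `γ ≥ ℵ₀` be regular and suppose that for every `ε > 0` every
proper closed ball of `X` can be covered by fewer than `γ` open `ε`-balls. If
`(CL(X), W_ρ)` is normal, then `d(X) ≤ γ`. -/
theorem stmt_16 (X : Type u) [MetricSpace X] (γ : Cardinal.{u})
    (hγ : γ.IsRegular)
    (h : ∀ ε > (0:ℝ), ∀ (x : X) (α : ℝ), closedBall x α ≠ Set.univ →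
      ∃ S : Set X, #↥S < γ ∧ closedBall x α ⊆ ⋃ c ∈ S, ball c ε)
    (hn : @NormalSpace (CL X) (wijsman X ‹MetricSpace X›)) :
    density X inferInstance ≤ γ := by
  let _ : TopologicalSpace (CL X) := wijsmanTopology
  have hω := hγ.aleph0_le
  by_contra hd
  obtain ⟨ε, hε, D, hD, hsep⟩ := exists_separated hω hd
  obtain ⟨I, hID, hI⟩ := le_mk_iff_exists_subset.1 hD.le
  have hrest : γ ≤ #↥(D \ I) := by
    by_contra! hlt
    refine hD.not_ge ?_
    rw [← mk_sdiff_add_mk hID, hI]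
    exact add_le_of_le hω hlt.le le_rfl
  obtain ⟨J, hJD, hJ⟩ := le_mk_iff_exists_subset.1 hrest
  have hsI := hsep.mono hID
  have hsJ := hsep.mono (hJD.trans sdiff_subset)
  have hcI := isClosed_singles (isClosed_of_pairwise_le_dist hε hsI)
  have hcJ := isClosed_singles (isClosed_of_pairwise_le_dist hε hsJ)
  have hdisj : single '' I ⊆ (single '' J)ᶜ := by
    rintro _ ⟨y, hy, rfl⟩ ⟨y', hy', he⟩
    have : y' = y := singleton_injective (congrArg Subtype.val he)
    exact (hJD hy').2 (this ▸ hy)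
  obtain ⟨W, hWo, hIW, hWJ⟩ := normal_exists_closure_subset hcI hcJ.isOpen_compl hdisj
  obtain ⟨U, hUo, hIU, hUW⟩ := normal_exists_closure_subset hcI hWo hIW
  -- `U ⊇ single '' I` and `(closure W)ᶜ ⊇ single '' J` have disjoint closures
  obtain ⟨T₁, hT₁, hz₁⟩ := exists_support hω hI hUo hIU
  obtain ⟨T₂, hT₂, hz₂⟩ := exists_support hω hJ (isClosed_closure (s := W)).isOpen_compl
    (subset_compl_comm.1 hWJ)
  obtain ⟨z, hz⟩ := exists_farthest hω h hd (T₁ ∪ T₂)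
    ((mk_union_le _ _).trans (add_le_of_le hω hT₁ hT₂))
  have hzU := single_mem_closure hγ h hε hsI hI (hz₁ z fun x hx => hz x (Or.inl hx))
  have hzV := single_mem_closure hγ h hε hsJ hJ (hz₂ z fun x hx => hz x (Or.inr hx))
  have hsub : (closure W)ᶜ ⊆ Wᶜ := compl_subset_compl.2 subset_closure
  exact closure_minimal hsub hWo.isClosed_compl hzV (hUW hzU)
end

section
/- Let (X,ρ) be a metric space and let Y be the set of all points of X that have a compact neighborhood. If Y is separable (as a subspace of X) and (CL(X), W_ρ) is a normal topological space, then X is separable. -/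
/-!
Let `Y` be the set of points with a compact neighbourhood, and suppose `X` is not separable while
`Y` is. Then `Yᶜ` is not separable, so it contains an uncountable family `z a`, `a : I`, of points
at mutual distance at least `8 * s` for some `s > 0` (`exists_uncountable_separated`). No closed
ball around `z a` is compact, so the closed `s / 4`-ball contains an injective sequence `p a`
without cluster points (`exists_divergent_seq`). Sending `f : I → ℕ` to the complement of
`⋃ a, ball (z a) s` together with the points `p a (f a)` is a closed embedding of `ℕ ^ I` in the
Wijsman hyperspace (`exists_isClosedEmbedding`). Normality passes to closed subspaces, but by
Stone's theorem `ℕ ^ I` is not normal for uncountable `I` (`not_normalSpace_pi_nat`).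
-/

open Cardinal Set Metric Topology

universe u v

open Filter

/-! ### Stone's theorem: uncountable powers of `ℕ` are not normal -/

/-- The functions `I → ℕ` that are injective away from the value `k`. -/
def almostInjective (I : Type v) (k : ℕ) : Set (I → ℕ) :=
  {f | ∀ a b, a ≠ b → f a = f b → f a = k}

theorem isClosed_almostInjective (I : Type v) (k : ℕ) : IsClosed (almostInjective I k) := by
  have : almostInjective I k =
      ⋂ a, ⋂ b, ⋂ _ : a ≠ b, {f : I → ℕ | f a = f b → f a = k} := by
    ext f; simp [almostInjective]
  rw [this]
  refine isClosed_iInter fun a => isClosed_iInter fun b => isClosed_iInter fun _ => ?_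
  have hc : Continuous fun f : I → ℕ => (f a, f b) := by fun_prop
  exact (isClosed_discrete {p : ℕ × ℕ | p.1 = p.2 → p.1 = k}).preimage hc

theorem exists_finset_agree {I : Type v} {U : Set (I → ℕ)} (hU : IsOpen U) {f : I → ℕ}
    (hf : f ∈ U) : ∃ B : Finset I, ∀ g : I → ℕ, (∀ a ∈ B, g a = f a) → g ∈ U := by
  obtain ⟨B, u, hu, hsub⟩ := isOpen_pi_iff.1 hU f hf
  exact ⟨B, fun g hg => hsub fun a ha => by rw [hg a ha]; exact (hu a ha).2⟩

open Classical in
/-- A finite list `l` of coordinates, read as a function: each entry of `l` gets its position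
in the list, shifted by `2` to avoid the exceptional values `0` and `1`, and every other
coordinate gets `0`. -/
noncomputable def listFun {I : Type v} (l : List I) : I → ℕ :=
  fun a => if a ∈ l then l.idxOf a + 2 else 0

theorem listFun_mem {I : Type v} (l : List I) : listFun l ∈ almostInjective I 0 := by
  classical
  intro a b hab h
  unfold listFun at *
  by_cases ha : a ∈ l
  · by_cases hb : b ∈ l
    · simp only [ha, hb, if_true] at h
      exact absurd ((List.idxOf_inj ha).1 (by convert Nat.add_right_cancel h)) hab
    · simp [ha, hb] at h
  · simp [ha]

/-- Stone's theorem. The disjoint closed sets `almostInjective I 0` and `almostInjective I 1`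
have no disjoint open neighbourhoods: a list of coordinates is extended repeatedly by a finite
set on which membership of `listFun` in the first neighbourhood is decided, and the function
enumerating the union of all the lists, extended by `1`, is then in the closure of that
neighbourhood. -/
theorem not_normalSpace_pi_nat (I : Type v) [Uncountable I] : ¬ NormalSpace (I → ℕ) := by
  classical
  intro hN
  have hdisj : Disjoint (almostInjective I 0) (almostInjective I 1) := by
    rw [Set.disjoint_left]
    intro f h0 h1
    have hinj : Function.Injective f := by
      intro a b hab
      by_contra hne
      have e0 := h0 a b hne hab
      have e1 := h1 a b hne hab
      omega
    exact not_countable_iff.2 ‹Uncountable I› hinj.countable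
  obtain ⟨U, V, hU, hV, hFU, hFV, hUV⟩ :=
    normal_separation (isClosed_almostInjective I 0) (isClosed_almostInjective I 1) hdisj
  choose B hB using fun l : List I => exists_finset_agree hU (hFU (listFun_mem l))
  obtain ⟨L, hL⟩ : ∃ L : ℕ → List I, ∀ n, L (n + 1) = L n ++ (B (L n)).toList :=
    ⟨fun n => Nat.rec [] (fun _ l => l ++ (B l).toList) n, fun _ => rfl⟩
  have hpre : ∀ m n, m ≤ n → L m <+: L n := by
    intro m n hmn
    induction n, hmn using Nat.le_induction with
    | base => exact List.prefix_rfl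
    | succ n _ ih => exact ih.trans (hL n ▸ List.prefix_append _ _)
  have hidx : ∀ m n a, a ∈ L m → a ∈ L n → (L m).idxOf a = (L n).idxOf a := by
    have key : ∀ m n a, m ≤ n → a ∈ L m → (L m).idxOf a = (L n).idxOf a := by
      intro m n a hmn ha
      obtain ⟨t, ht⟩ := hpre m n hmn
      rw [← ht, List.idxOf_append_of_mem ha]
    intro m n a hm hn
    rcases le_total m n with h | h
    · exact key m n a h hm
    · exact (key n m a h hn).symm
  have hex : ∀ a, ∃ v : ℕ, (∀ n, a ∈ L n → v = (L n).idxOf a + 2) ∧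
      ((¬ ∃ n, a ∈ L n) → v = 1) := by
    intro a
    by_cases h : ∃ n, a ∈ L n
    · obtain ⟨m, hm⟩ := h
      exact ⟨(L m).idxOf a + 2, fun n hn => by rw [hidx m n a hm hn], fun h' => absurd ⟨m, hm⟩ h'⟩
    · exact ⟨1, fun n hn => absurd ⟨n, hn⟩ h, fun _ => rfl⟩
  choose y hy' hy1 using hex
  have hy : ∀ n a, a ∈ L n → y a = (L n).idxOf a + 2 := fun n a => hy' a n
  have hyF : y ∈ almostInjective I 1 := by
    intro a b hab h
    by_contra hne
    have ha : ∃ n, a ∈ L n := by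
      by_contra h'
      exact hne (hy1 a h')
    have hb : ∃ n, b ∈ L n := by
      by_contra h'
      exact hne (h.trans (hy1 b h'))
    obtain ⟨m, hm⟩ := ha
    obtain ⟨n, hn⟩ := hb
    have hm' := (hpre m _ (le_max_left m n)).subset hm
    have hn' := (hpre n _ (le_max_right m n)).subset hn
    rw [hy _ a hm', hy _ b hn'] at h
    exact hab ((List.idxOf_inj hm').1 (Nat.add_right_cancel h))
  obtain ⟨C, hC⟩ := exists_finset_agree hV (hFV hyF)
  obtain ⟨N, hN⟩ : ∃ N, ∀ a ∈ C, (∃ n, a ∈ L n) → a ∈ L N := by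
    choose! g hg using fun (a : I) (h : ∃ n, a ∈ L n) => h
    refine ⟨C.sup g, fun a ha h => (hpre _ _ (Finset.le_sup ha)).subset (hg a h)⟩
  -- `z` agrees with `listFun (L N)` on `B (L N)` and with `y` on `C`.
  let z : I → ℕ := fun a =>
    if a ∈ L N then (L N).idxOf a + 2 else if a ∈ L (N + 1) then 0 else 1
  have hzU : z ∈ U := by
    refine hB (L N) z fun a ha => ?_
    by_cases h : a ∈ L N
    · simp [z, listFun, h]
    · have h' : a ∈ L (N + 1) := by rw [hL]; simp [ha]
      simp [z, listFun, h, h']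
  have hzV : z ∈ V := by
    refine hC z fun a ha => ?_
    by_cases h : a ∈ L N
    · simp [z, h, hy N a h]
    · have h' : ¬ ∃ n, a ∈ L n := fun h' => h (hN a ha h')
      have h'' : a ∉ L (N + 1) := fun h2 => h' ⟨_, h2⟩
      simp [z, h, h'', hy1 a h']
  exact Set.disjoint_left.1 hUV hzU hzV

/-! ### Separated sets and divergent sequences in metric spaces -/

theorem exists_uncountable_separated_s18 {X : Type u} [MetricSpace X] {Z : Set X}
    (hZ : ¬ TopologicalSpace.IsSeparable Z) :
    ∃ s > (0 : ℝ), ∃ T ⊆ Z, ¬ T.Countable ∧ T.Pairwise fun x y => 8 * s ≤ dist x y := by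
  by_contra! hcon
  refine hZ ?_
  obtain ⟨t, -, htc, ht⟩ := EMetric.subset_countable_closure_of_almost_dense_set Z (by
    intro ε hε
    obtain ⟨δ, hδ0, hδ⟩ : ∃ δ : ℝ, 0 < δ ∧ ENNReal.ofReal δ ≤ ε := by
      obtain ⟨q, hq0, hq⟩ := ENNReal.lt_iff_exists_nnreal_btwn.1 hε
      exact ⟨q, by simpa using hq0, by simpa using hq.le⟩
    obtain ⟨T, hT⟩ : ∃ T, Maximal
        (· ∈ {T : Set X | T ⊆ Z ∧ T.Pairwise fun x y => δ ≤ dist x y}) T := by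
      refine zorn_subset _ fun c hc hchain => ⟨⋃₀ c, ⟨?_, ?_⟩, fun s hs => subset_sUnion_of_mem hs⟩
      · exact sUnion_subset fun s hs => (hc hs).1
      · exact (pairwise_sUnion hchain.directedOn).2 fun s hs => (hc hs).2
    have hTc : T.Countable := by
      by_contra hTc
      refine hcon (δ / 8) (by positivity) T hT.prop.1 hTc ?_
      intro x hx y hy hxy
      have := hT.prop.2 hx hy hxy
      linarith
    refine ⟨T, hTc, fun x hx => ?_⟩
    by_contra hx'
    have hfar : ∀ y ∈ T, δ ≤ dist x y := by
      intro y hy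
      by_contra hlt
      refine hx' (mem_biUnion hy ?_)
      rw [Metric.mem_closedEBall, edist_dist]
      exact (ENNReal.ofReal_le_ofReal (not_le.1 hlt).le).trans hδ
    have hins : insert x T ∈ {T : Set X | T ⊆ Z ∧ T.Pairwise fun x y => δ ≤ dist x y} := by
      refine ⟨insert_subset hx hT.prop.1, hT.prop.2.insert fun y hy _ => ⟨hfar y hy, ?_⟩⟩
      rw [dist_comm]; exact hfar y hy
    have hxT : x ∈ T := hT.le_of_ge hins (subset_insert x T) (mem_insert x T)
    have := hfar x hxT
    rw [dist_self] at this
    linarith)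
  exact ⟨t, htc, ht⟩

/-- A closed noncompact set contains an injective sequence without cluster points. -/
theorem exists_divergent_seq {X : Type u} [MetricSpace X] {K : Set X} (hKc : IsClosed K)
    (hK : ¬ IsCompact K) :
    ∃ x : ℕ → X, (∀ n, x n ∈ K) ∧ Function.Injective x ∧
      ∀ (F : Filter ℕ) [F.NeBot], F ≤ cofinite → ∀ a, ¬ Tendsto x F (𝓝 a) := by
  rw [isCompact_iff_isSeqCompact, IsSeqCompact] at hK
  push Not at hK
  obtain ⟨x, hxK, hx⟩ := hK
  have hx' : ∀ (F : Filter ℕ) [F.NeBot], F ≤ cofinite → ∀ a, ¬ Tendsto x F (𝓝 a) := by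
    intro F _ hF a ha
    have hcl : MapClusterPt a atTop x := by
      have : MapClusterPt a F x := ha.mapClusterPt
      exact this.mono (Nat.cofinite_eq_atTop ▸ hF)
    obtain ⟨φ, hφ, hlim⟩ := hcl.tendsto_subseq
    exact hx a (hKc.mem_of_tendsto hlim (Eventually.of_forall fun n => hxK _)) φ hφ hlim
  have hinf : (range x).Infinite := by
    intro hfin
    obtain ⟨a, ha, φ, hφ, hlim⟩ := hfin.isCompact.isSeqCompact fun n => mem_range_self n
    obtain ⟨m, rfl⟩ := ha
    exact hx _ (hxK m) φ hφ hlim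
  let e := hinf.natEmbedding
  choose k hk using fun n => (e n).2
  have hinj : Function.Injective fun n => x (k n) := by
    intro m n h
    simp only [hk] at h
    exact e.injective (Subtype.ext h)
  have hkinj : Function.Injective k := fun m n h => hinj (by simp [h])
  refine ⟨fun n => x (k n), fun n => hxK _, hinj, fun F _ hF a ha => ?_⟩
  exact hx' (F.map k) ((map_mono hF).trans hkinj.tendsto_cofinite) a (tendsto_map'_iff.2 ha)

/-! ### A closed copy of `ℕ ^ I` in the Wijsman hyperspace -/

theorem continuous_wijsman_iff {X : Type u} [m : MetricSpace X] {E : Type v} [TopologicalSpace E]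
    {F : E → CL X} :
    @Continuous _ _ _ (wijsman X m) F ↔ ∀ x, Continuous fun e => infDist x (F e).1 := by
  unfold wijsman
  rw [continuous_iInf_rng]
  exact forall_congr' fun x => continuous_induced_rng

theorem tendsto_infDist_of_tendsto_wijsman {X : Type u} [m : MetricSpace X] {E : Type v}
    {l : Filter E} {F : E → CL X} {C : CL X} (h : Tendsto F l (@nhds _ (wijsman X m) C)) (x : X) :
    Tendsto (fun e => infDist x (F e).1) l (𝓝 (infDist x C.1)) := by
  unfold wijsman at h
  rw [nhds_iInf, tendsto_iInf] at h
  have hx := h x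
  rw [nhds_induced, tendsto_comap_iff] at hx
  exact hx

theorem CL.ext_infDist {X : Type u} [m : MetricSpace X] {A B : CL X}
    (h : ∀ x, infDist x A.1 = infDist x B.1) : A = B := by
  refine Subtype.ext (Set.ext fun x => ?_)
  rw [A.2.2.mem_iff_infDist_zero A.2.1, B.2.2.mem_iff_infDist_zero B.2.1, h]

/-- Let `z a` be `8 * s`-separated points and `p a` an injective sequence without cluster points
in the closed `s / 4`-ball around `z a`, for each `a : I`. The map sending `f : I → ℕ` to the
complement of all the balls `ball (z a) s`, together with the points `p a (f a)`, is a closed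
embedding for the Wijsman topology. It is continuous because the distance from a point of
`ball (z a) s` to the image depends on `f a` only. It is closed because if `f a` tends to infinity
while the images converge to `A`, then `A` has a point deep inside `ball (z a) s`, and that point
is a cluster point of `p a`. -/
theorem exists_isClosedEmbedding {X : Type u} [m : MetricSpace X] {I : Type v} [Nonempty I] {s : ℝ}
    (hs : 0 < s) (z : I → X) (hz : ∀ a b, a ≠ b → 8 * s ≤ dist (z a) (z b)) (p : I → ℕ → X)
    (hp : ∀ a n, dist (p a n) (z a) ≤ s / 4) (hinj : ∀ a, Function.Injective (p a))
    (hdiv : ∀ a (F : Filter ℕ) [F.NeBot], F ≤ cofinite → ∀ c, ¬ Tendsto (p a) F (𝓝 c)) :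
    ∃ Φ : (I → ℕ) → CL X, @IsClosedEmbedding _ _ _ (wijsman X m) Φ := by
  let S : Set X := (⋃ a, ball (z a) s)ᶜ
  have hSc : IsClosed S := (isOpen_iUnion fun a => isOpen_ball).isClosed_compl
  let A : (I → ℕ) → Set X := fun f => S ∪ range fun a => p a (f a)
  have hmem : ∀ f a, p a (f a) ∈ A f := fun f a => Or.inr ⟨a, rfl⟩
  have hfar : ∀ a b m x, a ≠ b → dist x (z a) < s → 5 * s ≤ dist x (p b m) := by
    intro a b m x hab hx
    have h1 := hz a b hab
    have h2 := hp b m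
    have h3 := dist_triangle4 (z a) x (p b m) (z b)
    rw [dist_comm (z a) x] at h3
    linarith
  -- The only point of `A f` in the ball around `z a` is `p a (f a)`.
  have hball : ∀ f a y, y ∈ A f → dist y (z a) < s → y = p a (f a) := by
    rintro f a y (hy | ⟨b, rfl⟩) hya
    · exact absurd (mem_iUnion.2 ⟨a, hya⟩) hy
    · by_cases hab : a = b
      · subst hab; rfl
      · have := hfar a b (f b) _ hab hya
        simp only [dist_self] at this
        linarith
  have hAc : ∀ f, IsClosed (A f) := by
    intro f
    refine hSc.union (isClosed_of_pairwise_le_dist hs ?_)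
    rintro _ ⟨a, rfl⟩ _ ⟨b, rfl⟩ hne
    have hab : a ≠ b := by rintro rfl; exact hne rfl
    have := hfar a b (f b) (p a (f a)) hab (by linarith [hp a (f a)])
    simp only
    linarith
  let Φ : (I → ℕ) → CL X := fun f => ⟨A f, ⟨_, hmem f (Classical.arbitrary I)⟩, hAc f⟩
  have hdep : ∀ f g a x, dist x (z a) < s → f a = g a → infDist x (A f) ≤ infDist x (A g) := by
    intro f g a x hx hfg
    refine (le_infDist ⟨_, hmem g a⟩).2 ?_
    rintro y (hy | ⟨b, rfl⟩)
    · exact infDist_le_dist_of_mem (Or.inl hy)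
    · by_cases hab : a = b
      · subst hab
        exact infDist_le_dist_of_mem (Or.inr ⟨a, by simp only [hfg]⟩)
      · have h1 : infDist x (A f) ≤ dist x (p a (f a)) := infDist_le_dist_of_mem (hmem f a)
        have h2 := hfar a b (g b) x hab hx
        have h3 := dist_triangle x (z a) (p a (f a))
        have h4 := hp a (f a)
        rw [dist_comm] at h4
        linarith
  have hcont : @Continuous _ _ _ (wijsman X m) Φ := by
    rw [continuous_wijsman_iff]
    intro x
    by_cases hx : x ∈ S
    · have : (fun f => infDist x (Φ f).1) = fun _ => 0 :=
        funext fun f => infDist_zero_of_mem (Or.inl hx)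
      rw [this]
      exact continuous_const
    · obtain ⟨a, ha⟩ := mem_iUnion.1 (not_not.1 hx)
      have : (fun f => infDist x (Φ f).1) =
          (fun n : ℕ => infDist x (A fun _ => n)) ∘ fun f => f a :=
        funext fun f => le_antisymm (hdep _ _ a x ha rfl) (hdep _ _ a x ha rfl)
      rw [this]
      exact continuous_of_discreteTopology.comp (continuous_apply a)
  have hΦinj : Function.Injective Φ := by
    intro f g hfg
    have hA : A f = A g := congrArg Subtype.val hfg
    funext a
    exact hinj a (hball g a _ (hA ▸ hmem f a) (by linarith [hp a (f a)]))
  have hlimit : ∀ (𝒰 : Ultrafilter (I → ℕ)) (C : CL X),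
      (∀ x, Tendsto (fun f => infDist x (A f)) (𝒰 : Filter (I → ℕ)) (𝓝 (infDist x C.1))) →
      ∃ g, Φ g = C ∧ (𝒰 : Filter (I → ℕ)) ≤ 𝓝 g := by
    intro 𝒰 C hlim
    have hpure : ∀ a, ∃ n, ∀ᶠ f in (𝒰 : Filter (I → ℕ)), f a = n := by
      intro a
      rcases (𝒰.map fun f => f a).le_cofinite_or_eq_pure with hcof | ⟨n, hn⟩
      · exfalso
        have hle : infDist (p a 0) C.1 ≤ s / 2 := by
          refine le_of_tendsto (hlim (p a 0)) (Eventually.of_forall fun f => ?_)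
          refine (infDist_le_dist_of_mem (hmem f a)).trans ?_
          have h1 := hp a 0
          have h2 := hp a (f a)
          have h3 := dist_triangle_right (p a 0) (p a (f a)) (z a)
          linarith
        obtain ⟨c, hcC, hc⟩ :=
          (infDist_lt_iff C.2.1).1 (hle.trans_lt (by linarith : s / 2 < 5 / 8 * s))
        have hcz : dist c (z a) < 7 / 8 * s := by
          have h1 := hp a 0
          have h3 := dist_triangle_left c (z a) (p a 0)
          linarith
        have hc0 : Tendsto (fun f => infDist c (A f)) 𝒰 (𝓝 0) := by
          have := hlim c
          rwa [infDist_zero_of_mem hcC] at this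
        refine hdiv a ((𝒰.map fun f => f a : Ultrafilter ℕ) : Filter ℕ) hcof c ?_
        rw [Ultrafilter.coe_map, tendsto_map'_iff, Metric.tendsto_nhds]
        intro ε hε
        filter_upwards [hc0.eventually (gt_mem_nhds (lt_min hε (by linarith : 0 < s / 8)))] with f hf
        obtain ⟨y, hyA, hy⟩ := (infDist_lt_iff ⟨_, hmem f a⟩).1 hf
        have hyz : dist y (z a) < s := by
          have h1 := dist_triangle_left y (z a) c
          have h2 := hy.trans_le (min_le_right _ _)
          linarith
        rw [hball f a y hyA hyz, dist_comm] at hy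
        exact hy.trans_le (min_le_left _ _)
      · refine ⟨n, ?_⟩
        have : {n} ∈ (𝒰.map fun f => f a) := by rw [hn]; exact mem_singleton n
        exact this
    choose g hg using hpure
    have hle : (𝒰 : Filter (I → ℕ)) ≤ 𝓝 g := by
      refine tendsto_id'.1 (tendsto_pi_nhds.2 fun a => ?_)
      rw [nhds_discrete, tendsto_pure]
      exact hg a
    refine ⟨g, CL.ext_infDist fun x => ?_, hle⟩
    exact tendsto_nhds_unique
      (((continuous_wijsman_iff.1 hcont x).tendsto g).mono_left hle) (hlim x)
  let _ := wijsman X m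
  refine ⟨Φ, .of_continuous_injective_isClosedMap hcont hΦinj (IsProperMap.isClosedMap ?_)⟩
  exact isProperMap_iff_ultrafilter.2 ⟨hcont, fun 𝒰 C hC =>
    hlimit 𝒰 C (tendsto_infDist_of_tendsto_wijsman (F := Φ) hC)⟩

/-- if the set of points of `X` having a compact neighborhood is
separable and `(CL(X), W_ρ)` is normal, then `X` is separable. -/
theorem stmt_18 (X : Type u) [MetricSpace X]
    (h : TopologicalSpace.IsSeparable
      { x : X | ∃ K : Set X, IsCompact K ∧ K ∈ nhds x })
    (hn : @NormalSpace (CL X) (wijsman X ‹MetricSpace X›)) :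
    TopologicalSpace.SeparableSpace X := by
  by_contra hsep
  set Y : Set X := { x : X | ∃ K : Set X, IsCompact K ∧ K ∈ nhds x } with hY
  have hZ : ¬ TopologicalSpace.IsSeparable Yᶜ := by
    intro hZ
    have := h.union hZ
    rw [union_compl_self] at this
    exact hsep (TopologicalSpace.isSeparable_univ_iff.1 this)
  obtain ⟨s, hs, T, hTZ, hTc, hT⟩ := exists_uncountable_separated_s18 hZ
  have hnc : ∀ a : T, ¬ IsCompact (closedBall (a : X) (s / 4)) := fun a hK =>
    hTZ a.2 ⟨_, hK, closedBall_mem_nhds _ (by positivity)⟩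
  choose p hp hinj hdiv using fun a : T => exists_divergent_seq isClosed_closedBall (hnc a)
  have : Uncountable T := not_countable_iff.1 fun hc => hTc (countable_coe_iff.1 hc)
  obtain ⟨Φ, hΦ⟩ := exists_isClosedEmbedding hs (fun a : T => (a : X))
    (fun a b hab => hT a.2 b.2 fun he => hab (Subtype.ext he)) p hp hinj hdiv
  let _ := wijsman X ‹MetricSpace X›
  exact not_normalSpace_pi_nat T hΦ.normalSpace
end
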